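/- For all integers n ≥ 1 and k ≥ 0 one has the exact moment formula C(n+k,k)·E[V_n^k] = Σ_{i=1}^{n} Σ_{ℓ=i}^{n+k} (−1)^{ℓ+i}·C(n+k−i,k)·C(n+k,ℓ)·c(i,ℓ). -/

import Mathlib

open MeasureTheory

noncomputable section

/-- The triangle with vertices (0,0), (1,0), (0,1). -/
def T : Set (ℝ × ℝ) := convexHull ℝ {(0, 0), (1, 0), (0, 1)}

/-- The uniform distribution on `T`: twice Lebesgue measure restricted to `T`. -/
def μT : Measure (ℝ × ℝ) := (2 : ENNReal) • (volume.restrict T)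

/-- Joint law of `n` independent uniform points in `T`. -/
def P (n : ℕ) : Measure (Fin n → ℝ × ℝ) := Measure.pi fun _ => μT

/-- The random convex chain: convex hull of the points together with `(1,0)` and `(0,1)`. -/
def Tchain (n : ℕ) (ω : Fin n → ℝ × ℝ) : Set (ℝ × ℝ) :=
  convexHull ℝ (Set.range ω ∪ {(1, 0), (0, 1)})

/-- Normalized area `V_n = 2 vol(T_n)`. -/
def V (n : ℕ) (ω : Fin n → ℝ × ℝ) : ℝ := 2 * (volume (Tchain n ω)).toReal

/-- Number of vertices of `T_n` other than the two corners. -/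
def N (n : ℕ) (ω : Fin n → ℝ × ℝ) : ℕ :=
  (Set.extremePoints ℝ (Tchain n ω)).ncard - 2

/-- Normalized moments `q_{n,k} = C(n+k,k) E[V_n^k]`. -/
def q (n k : ℕ) : ℝ := ((n + k).choose k : ℝ) * ∫ ω, (V n ω) ^ k ∂ P n

/-- Probability generating function of `N_n`. -/
def G (n : ℕ) (t : ℝ) : ℝ := ∫ ω, t ^ (N n ω) ∂ P n

/-- Harmonic number. -/
def H (j : ℕ) : ℝ := ∑ i ∈ Finset.range j, 1 / ((i : ℝ) + 1)

/-- Generalized harmonic number of order 2. -/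
def H2 (j : ℕ) : ℝ := ∑ i ∈ Finset.range j, 1 / ((i : ℝ) + 1) ^ 2

/-- `c(k,ℓ)`: elementary symmetric polynomial `e_k` of `2/(j(j+1))`, `j = 1,…,ℓ`. -/
def c (k l : ℕ) : ℝ :=
  ∑ S ∈ (Finset.Icc 1 l).powersetCard k, ∏ j ∈ S, 2 / ((j : ℝ) * ((j : ℝ) + 1))

/-
Call the abscissa where the line through `(0,1)` and a point meets the axis `v = 0` its base
projection. Among `n + 1` sample points let `X = (z (1 - y), y)` have the smallest base projection
`z`. The other points are then uniform in the triangle `(z,0), (1,0), (0,1)`, and the affine map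
rescaling it to `T` moves `X` to `(0,y)`. Points above the line from `(0,y)` to `(1,0)` lie in the
hull of `X` and the corners, hence do not matter; the `m` points below it are uniform in an affine
image of `T`. Therefore `V_{n+1} = (1 - z) (1 - y + y V_m)` with `m` binomial of parameters `n` and
`y`, which expresses `q (n+1) k` through the `q m j` with `m ≤ n`, `j ≤ k`.

On the other side, the recursion of `c i ℓ` in `ℓ` and summation by parts give
`w_{N+1,i+1} = 2 / ((N+1) (N+2)) Σ_{M ≤ N} (N - M + 1) w_{M,i}` for
`w_{N,i} = Σ_ℓ (-1)^{ℓ+i} C(N,ℓ) c(i,ℓ)`, and Vandermonde's identity turns this into the same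
recursion for the sum `Σ_i C(n+k-i,k) w_{n+k,i}`.
-/

open Finset.HasAntidiagonal (antidiagonal mem_antidiagonal)
open scoped ENNReal

/-- `Fin.range_insertNth` is stated with `Set.insert`, which `rw` does not match with `insert`. -/
lemma range_insertNth_eq_insert {α : Type*} {n : ℕ} (i : Fin (n + 1)) (x : α) (ω : Fin n → α) :
    Set.range (i.insertNth x ω : Fin (n + 1) → α) = insert x (Set.range ω) :=
  Fin.range_insertNth i x ω

section Product

variable {α : Type*} [MeasurableSpace α]

lemma lintegral_pi_insertNth (μ : Measure α) [SigmaFinite μ] {n : ℕ} (i : Fin (n + 1))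
    {f : (Fin (n + 1) → α) → ℝ≥0∞} (hf : Measurable f) :
    ∫⁻ ω, f ω ∂Measure.pi (fun _ => μ) =
      ∫⁻ x, ∫⁻ ω, f (i.insertNth x ω) ∂Measure.pi (fun _ => μ) ∂μ := by
  have he := (measurePreserving_piFinSuccAbove (fun _ : Fin (n + 1) => μ) i).symm
  rw [← he.lintegral_comp_emb (MeasurableEquiv.measurableEmbedding _)]
  exact lintegral_prod _ (hf.comp (MeasurableEquiv.measurable _)).aemeasurable

lemma lintegral_pi_range_succ (μ : Measure α) [SigmaFinite μ] {n : ℕ} {F : Set α → ℝ≥0∞}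
    (hF : Measurable fun ω : Fin (n + 1) → α => F (Set.range ω)) :
    ∫⁻ ω, F (Set.range ω) ∂Measure.pi (fun _ : Fin (n + 1) => μ) =
      ∫⁻ x, ∫⁻ ω, F (insert x (Set.range ω)) ∂Measure.pi (fun _ : Fin n => μ) ∂μ := by
  simp only [lintegral_pi_insertNth μ 0 hF, range_insertNth_eq_insert]

lemma pi_smul_map {β : Type*} [MeasurableSpace β] (μ : Measure α) [IsFiniteMeasure μ] {f : α → β}
    (hf : Measurable f) {r : ℝ≥0∞} (hr : r ≠ ∞) (n : ℕ) :
    Measure.pi (fun _ : Fin n => r • μ.map f) =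
      r ^ n • (Measure.pi fun _ : Fin n => μ).map (f ∘ ·) := by
  have hpi : (Measure.pi fun _ : Fin n => μ).map (f ∘ ·) = Measure.pi fun _ => μ.map f :=
    Measure.pi_map_pi fun _ => hf.aemeasurable
  have := (μ.map f).smul_finite hr
  refine Measure.pi_eq fun s _ => ?_
  simp [hpi, Measure.pi_pi, Finset.prod_mul_distrib]

lemma lintegral_pi_smul_map {β : Type*} [MeasurableSpace β] (μ : Measure α) [IsFiniteMeasure μ]
    {f : α → β} (hf : Measurable f) {r : ℝ≥0∞} (hr : r ≠ ∞) (n : ℕ) {F : Set β → ℝ≥0∞}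
    (hF : Measurable fun ω : Fin n → β => F (Set.range ω)) :
    ∫⁻ ω, F (Set.range ω) ∂Measure.pi (fun _ : Fin n => r • μ.map f) =
      r ^ n * ∫⁻ ω, F (f '' Set.range ω) ∂Measure.pi (fun _ : Fin n => μ) := by
  rw [pi_smul_map μ hf hr, lintegral_smul_measure, lintegral_map hF (by fun_prop), smul_eq_mul]
  simp only [Set.range_comp]

lemma measurable_insert_range {F : Set α → ℝ≥0∞} {n : ℕ}
    (hF : Measurable fun ω : Fin (n + 1) → α => F (Set.range ω)) :
    Measurable fun p : α × (Fin n → α) => F (insert p.1 (Set.range p.2)) := by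
  simp only [← range_insertNth_eq_insert 0]
  exact hF.comp (MeasurableEquiv.piFinSuccAbove (fun _ : Fin (n + 1) => α) 0).symm.measurable

/-- Each of `n` independent points falls either into the part `ν`, where it does not affect `F`,
or into the part `ρ`. -/
lemma lintegral_pi_add_of_insert_eq (ν ρ : Measure α) [IsFiniteMeasure ν] [IsFiniteMeasure ρ]
    {F : Set α → ℝ≥0∞} (hF : ∀ n, Measurable fun ω : Fin n → α => F (Set.range ω))
    (hν : ∀ᵐ x ∂ν, ∀ s, F (insert x s) = F s) (n : ℕ) :
    ∫⁻ ω, F (Set.range ω) ∂Measure.pi (fun _ : Fin n => ν + ρ) =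
      ∑ p ∈ antidiagonal n, n.choose p.1 * (ν Set.univ ^ p.2 *
        ∫⁻ ω, F (Set.range ω) ∂Measure.pi (fun _ : Fin p.1 => ρ)) := by
  induction n generalizing F with
  | zero => simp
  | succ n ih =>
    have hν' (x : α) : ∀ᵐ z ∂ν, ∀ s, F (insert x (insert z s)) = F (insert x s) := by
      filter_upwards [hν] with z hz s
      rw [Set.insert_comm, hz]
    have hins (x : α) (m : ℕ) : Measurable fun ω : Fin m → α => F (insert x (Set.range ω)) :=
      (measurable_insert_range (hF _)).comp measurable_prodMk_left
    have hthrow : ∫⁻ x, ∫⁻ ω, F (insert x (Set.range ω)) ∂Measure.pi (fun _ : Fin n => ν + ρ) ∂ν =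
        ν Set.univ * ∫⁻ ω, F (Set.range ω) ∂Measure.pi (fun _ : Fin n => ν + ρ) := by
      rw [mul_comm, ← lintegral_const]
      refine lintegral_congr_ae ?_
      filter_upwards [hν] with x hx
      simp only [hx]
    have hkeep : ∫⁻ x, ∫⁻ ω, F (insert x (Set.range ω)) ∂Measure.pi (fun _ : Fin n => ν + ρ) ∂ρ =
        ∑ p ∈ antidiagonal n, n.choose p.1 * (ν Set.univ ^ p.2 *
          ∫⁻ ω, F (Set.range ω) ∂Measure.pi (fun _ : Fin (p.1 + 1) => ρ)) := by
      have hmeas (m : ℕ) : Measurable fun x =>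
          ∫⁻ ω, F (insert x (Set.range ω)) ∂Measure.pi (fun _ : Fin m => ρ) :=
        (measurable_insert_range (hF _)).lintegral_prod_right'
      simp only [fun x => ih (F := fun s => F (insert x s)) (hins x) (hν' x),
        lintegral_pi_range_succ ρ (hF _)]
      rw [lintegral_finsetSum _ fun p _ => ((hmeas p.1).const_mul _).const_mul _]
      refine Finset.sum_congr rfl fun p _ => ?_
      rw [lintegral_const_mul _ ((hmeas p.1).const_mul _), lintegral_const_mul _ (hmeas p.1)]
    rw [lintegral_pi_range_succ (ν + ρ) (hF _), lintegral_add_measure, hthrow, hkeep,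
      ih hF hν, Finset.mul_sum,
      Finset.sum_antidiagonal_choose_succ_mul fun m a => ν Set.univ ^ a *
        ∫⁻ ω, F (Set.range ω) ∂Measure.pi (fun _ : Fin m => ρ)]
    congr 1 <;> refine Finset.sum_congr rfl fun p hp => ?_
    · ring
    · rw [Nat.choose_symm_of_eq_add (mem_antidiagonal.1 hp).symm]

end Product

section Minimum

variable {α : Type*} [MeasurableSpace α] {μ : Measure α} [SigmaFinite μ] {h : α → ℝ}

lemma aedisjoint_pi_setOf_forall_le (hh : Measurable h) (hnull : ∀ r, μ {x | h x = r} = 0)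
    {n : ℕ} : Pairwise (Function.onFun (AEDisjoint (Measure.pi fun _ : Fin n => μ))
      fun i => {ω | ∀ j, h (ω i) ≤ h (ω j)}) := by
  cases n with
  | zero => exact fun i => i.elim0
  | succ n =>
    intro i j hij
    obtain ⟨l, rfl⟩ := Fin.exists_succAbove_eq hij.symm
    refine measure_mono_null (t := {ω | h (ω (i.succAbove l)) = h (ω i)})
      (fun ω hω => (hω.2 i).antisymm (hω.1 _)) ?_
    have hmeas : MeasurableSet {ω : Fin (n + 1) → α | h (ω (i.succAbove l)) = h (ω i)} :=
      measurableSet_eq_fun (by fun_prop) (by fun_prop)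
    rw [← lintegral_indicator_one hmeas,
      lintegral_pi_insertNth μ i (measurable_one.indicator hmeas)]
    refine lintegral_eq_zero_of_ae_eq_zero (.of_forall fun x => ?_)
    refine lintegral_eq_zero_of_ae_eq_zero ?_
    have hx : ∀ᵐ z ∂μ, h z ≠ h x := ae_iff.2 (by simpa using hnull (h x))
    filter_upwards [Measure.tendsto_eval_ae_ae.eventually hx] with ω hω
    simpa using hω

/-- Condition on which of the `n + 1` points minimises `h`. -/
lemma lintegral_pi_eq_lintegral_min (hh : Measurable h) (hnull : ∀ r, μ {x | h x = r} = 0) {n : ℕ}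
    {F : Set α → ℝ≥0∞} (hF : Measurable fun ω : Fin (n + 1) → α => F (Set.range ω)) :
    ∫⁻ ω, F (Set.range ω) ∂Measure.pi (fun _ : Fin (n + 1) => μ) =
      (n + 1) * ∫⁻ x, ∫⁻ ω, F (insert x (Set.range ω))
        ∂Measure.pi (fun _ : Fin n => μ.restrict {z | h x ≤ h z}) ∂μ := by
  set A : Fin (n + 1) → Set (Fin (n + 1) → α) := fun i => {ω | ∀ j, h (ω i) ≤ h (ω j)}
  have hA (i : Fin (n + 1)) : MeasurableSet (A i) :=
    .congr (.iInter fun j => measurableSet_le (f := fun ω : Fin (n + 1) → α => h (ω i))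
      (g := fun ω => h (ω j)) (by fun_prop) (by fun_prop)) (by ext; simp [A])
  have hunion : ⋃ i, A i = Set.univ :=
    Set.eq_univ_of_forall fun ω => Set.mem_iUnion.2 (Finite.exists_min fun i => h (ω i))
  have hterm (i : Fin (n + 1)) : ∫⁻ ω in A i, F (Set.range ω) ∂Measure.pi (fun _ => μ) =
      ∫⁻ x, ∫⁻ ω, F (insert x (Set.range ω))
        ∂Measure.pi (fun _ : Fin n => μ.restrict {z | h x ≤ h z}) ∂μ := by
    rw [← lintegral_indicator (hA i), lintegral_pi_insertNth μ i (hF.indicator (hA i))]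
    refine lintegral_congr fun x => ?_
    have hpi : i.insertNth x ⁻¹' A i = Set.univ.pi fun _ : Fin n => {z | h x ≤ h z} := by
      ext ω
      simp [A, Fin.forall_iff_succAbove i]
    have hms : MeasurableSet {z | h x ≤ h z} := measurableSet_le measurable_const hh
    rw [← Measure.restrict_pi_pi, ← lintegral_indicator (.univ_pi fun _ => hms), ← hpi]
    refine lintegral_congr fun ω => ?_
    simp only [Set.indicator, Set.mem_preimage, range_insertNth_eq_insert]
  rw [← setLIntegral_univ, ← hunion, lintegral_iUnion₀ (fun i => (hA i).nullMeasurableSet)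
    (aedisjoint_pi_setOf_forall_le hh hnull), tsum_fintype]
  simp [hterm]

end Minimum

lemma sum_powersetCard_insert_prod {ι R : Type*} [DecidableEq ι] [CommSemiring R] (f : ι → R)
    {s : Finset ι} {a : ι} (ha : a ∉ s) (k : ℕ) :
    ∑ S ∈ (insert a s).powersetCard (k + 1), ∏ i ∈ S, f i =
      ∑ S ∈ s.powersetCard (k + 1), ∏ i ∈ S, f i + f a * ∑ S ∈ s.powersetCard k, ∏ i ∈ S, f i := by
  simp only [← Finset.esymm_map_val, Finset.insert_val_of_notMem ha, Multiset.map_cons,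
    Multiset.esymm, Multiset.powersetCard_cons, Multiset.map_add, Multiset.sum_add,
    Multiset.map_map, Function.comp_def, Multiset.prod_cons, Multiset.sum_map_mul_left]

lemma c_zero_left (l : ℕ) : c 0 l = 1 := by
  simp [c]

lemma c_eq_zero_of_lt {k l : ℕ} (h : l < k) : c k l = 0 := by
  rw [c, Finset.powersetCard_eq_empty.2 (by simpa using h), Finset.sum_empty]

lemma c_succ_succ (k l : ℕ) :
    c (k + 1) (l + 1) = c (k + 1) l + 2 / ((l + 1) * (l + 2)) * c k l := by
  rw [c, ← Finset.insert_Icc_right_eq_Icc_add_one (by omega),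
    sum_powersetCard_insert_prod _ (by simp), c, c]
  push_cast
  ring

/-- The probability that `T_N` has exactly `i` vertices besides the two corners, as the alternating
sum in which it enters the moment formula. -/
def vertexProb (N i : ℕ) : ℝ :=
  ∑ l ∈ Finset.range (N + 1), (-1) ^ (l + i) * N.choose l * c i l

lemma vertexProb_eq_zero_of_lt {N i : ℕ} (h : N < i) : vertexProb N i = 0 :=
  Finset.sum_eq_zero fun l hl => by
    rw [c_eq_zero_of_lt ((Finset.mem_range_succ_iff.1 hl).trans_lt h), mul_zero]

lemma vertexProb_zero_right (N : ℕ) : vertexProb N 0 = if N = 0 then 1 else 0 := by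
  simp only [vertexProb, add_zero, c_zero_left, mul_one]
  exact_mod_cast Int.alternating_sum_range_choose (n := N)

lemma vertexProb_eq_sum_range {N B : ℕ} (h : N < B) (i : ℕ) :
    vertexProb N i = ∑ l ∈ Finset.range B, (-1) ^ (l + i) * N.choose l * c i l := by
  refine Finset.sum_subset (Finset.range_mono h) fun l _ hl => ?_
  rw [Nat.choose_eq_zero_of_lt (by simpa using hl), Nat.cast_zero, mul_zero, zero_mul]

lemma sum_antidiagonal_choose (N l : ℕ) :
    ∑ p ∈ antidiagonal N, p.1.choose l = (N + 1).choose (l + 1) := by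
  induction N with
  | zero => cases l <;> simp [Nat.choose_eq_zero_of_lt]
  | succ N ih => rw [Finset.Nat.sum_antidiagonal_succ', ih, ← Nat.choose_succ_succ']

lemma sum_antidiagonal_succ_mul_choose (N l : ℕ) :
    ∑ p ∈ antidiagonal N, (p.2 + 1) * p.1.choose l = (N + 2).choose (l + 2) := by
  induction N with
  | zero => cases l <;> simp [Nat.choose_eq_zero_of_lt]
  | succ N ih =>
    have hsum := sum_antidiagonal_choose (N + 1) l
    rw [Finset.Nat.sum_antidiagonal_succ'] at hsum ⊢
    rw [Nat.choose_succ_succ, ← hsum, ← ih, add_assoc, ← Finset.sum_add_distrib]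
    simp only [zero_add, one_mul, add_right_inj]
    exact Finset.sum_congr rfl fun p _ => by ring

lemma sum_alternating_choose_succ {R : Type*} [CommRing R] (N : ℕ) (f : ℕ → R) :
    ∑ l ∈ Finset.range (N + 2), (-1) ^ l * (N + 1).choose l * f l =
      ∑ l ∈ Finset.range (N + 1), (-1) ^ l * N.choose l * (f l - f (l + 1)) := by
  have h := Finset.sum_antidiagonal_choose_succ_mul (fun l _ => (-1) ^ l * f l) N
  rw [← Finset.sum_add_distrib] at h
  simp only [Finset.Nat.sum_antidiagonal_eq_sum_range_succ_mk] at h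
  convert h using 2 with l _ l hl
  · ring
  · rw [Nat.choose_symm (Finset.mem_range_succ_iff.1 hl)]
    ring

lemma choose_div_mul (N l : ℕ) :
    (N.choose l : ℝ) / ((l + 1) * (l + 2)) = (N + 2).choose (l + 2) / ((N + 1) * (N + 2)) := by
  have h₁ : ((N : ℝ) + 1) * N.choose l = (N + 1).choose (l + 1) * (l + 1) := by
    exact_mod_cast Nat.add_one_mul_choose_eq N l
  have h₂ : ((N : ℝ) + 2) * (N + 1).choose (l + 1) = (N + 2).choose (l + 2) * (l + 2) := by
    exact_mod_cast Nat.add_one_mul_choose_eq (N + 1) (l + 1)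
  rw [div_eq_div_iff (by positivity) (by positivity)]
  linear_combination (N + 2 : ℝ) * h₁ + (l + 1 : ℝ) * h₂

lemma vertexProb_succ_succ (N i : ℕ) :
    vertexProb (N + 1) (i + 1) =
      2 / ((N + 1) * (N + 2)) * ∑ p ∈ antidiagonal N, (p.2 + 1) * vertexProb p.1 i := by
  have hterm (l : ℕ) : (-1 : ℝ) ^ l * N.choose l * (c (i + 1) l - c (i + 1) (l + 1)) =
      -(2 / ((N + 1) * (N + 2)) *
        ∑ p ∈ antidiagonal N, (p.2 + 1) * ((-1) ^ l * p.1.choose l * c i l)) := by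
    have hsum : ∑ p ∈ antidiagonal N, ((p.2 : ℝ) + 1) * p.1.choose l = (N + 2).choose (l + 2) := by
      exact_mod_cast sum_antidiagonal_succ_mul_choose N l
    calc _ = -(2 * (-1) ^ l * c i l * (N.choose l / ((l + 1) * (l + 2)))) := by
          rw [c_succ_succ]; ring
      _ = _ := by
          rw [choose_div_mul, ← hsum, Finset.sum_div, Finset.mul_sum, Finset.mul_sum]
          congr 1
          exact Finset.sum_congr rfl fun p _ => by ring
  calc vertexProb (N + 1) (i + 1)
      = (-1) ^ (i + 1) * ∑ l ∈ Finset.range (N + 2),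
          (-1) ^ l * (N + 1).choose l * c (i + 1) l := by
        rw [vertexProb, Finset.mul_sum]
        exact Finset.sum_congr rfl fun l _ => by ring
    _ = (-1) ^ (i + 1) * ∑ l ∈ Finset.range (N + 1), -(2 / ((N + 1) * (N + 2)) *
          ∑ p ∈ antidiagonal N, (p.2 + 1) * ((-1) ^ l * p.1.choose l * c i l)) := by
        simp only [sum_alternating_choose_succ, hterm]
    _ = 2 / ((N + 1) * (N + 2)) * ∑ p ∈ antidiagonal N, (p.2 + 1) *
          ∑ l ∈ Finset.range (N + 1), (-1) ^ (l + i) * p.1.choose l * c i l := by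
        simp only [Finset.mul_sum, ← Finset.sum_neg_distrib]
        rw [Finset.sum_comm]
        exact Finset.sum_congr rfl fun p _ => Finset.sum_congr rfl fun l _ => by ring
    _ = _ := by
        congr 1
        refine Finset.sum_congr rfl fun p hp => ?_
        rw [vertexProb_eq_sum_range (Finset.Nat.antidiagonal.fst_lt hp)]

lemma sum_antidiagonal_add {M : Type*} [AddCommMonoid M] (n : ℕ) (r : ℕ × ℕ) {f : ℕ × ℕ → M}
    (hf : ∀ s, ¬r ≤ s → f s = 0) :
    ∑ p ∈ antidiagonal n, f (p + r) = ∑ s ∈ antidiagonal (n + (r.1 + r.2)), f s := by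
  refine Finset.sum_of_injOn (· + r) (add_left_injective r).injOn (fun p hp => ?_)
    (fun s hs hsr => hf s fun hrs => hsr ⟨s - r, ?_, tsub_add_cancel_of_le hrs⟩) fun _ _ => rfl
  · simp only [Finset.mem_coe, mem_antidiagonal, Prod.fst_add, Prod.snd_add] at hp ⊢
    omega
  · obtain ⟨h₁, h₂⟩ := Prod.le_def.1 hrs
    simp only [Finset.mem_coe, mem_antidiagonal, Prod.fst_sub, Prod.snd_sub] at hs ⊢
    omega

lemma sum_antidiagonal_grid_choose {R : Type*} [CommSemiring R] (n k i : ℕ) {F : ℕ × ℕ → R}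
    (hF : ∀ s, s.1 < i → F s = 0) :
    ∑ p ∈ antidiagonal n, ∑ r ∈ antidiagonal k,
        ((p.1 + r.1 - i).choose r.1 * (p.2 + r.2).choose r.2 : ℕ) * F (p + r) =
      (n + k - i).choose k * ∑ s ∈ antidiagonal (n + k), F s := by
  have hshift (r) (hr : r ∈ antidiagonal k) :
      ∑ p ∈ antidiagonal n, ((p.1 + r.1 - i).choose r.1 * (p.2 + r.2).choose r.2 : ℕ) * F (p + r) =
      ∑ s ∈ antidiagonal (n + k), ((s.1 - i).choose r.1 * s.2.choose r.2 : ℕ) * F s := by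
    rw [← mem_antidiagonal.1 hr, ← sum_antidiagonal_add]
    · rfl
    intro s hs
    rcases lt_or_ge s.1 i with hi | hi
    · rw [hF s hi, mul_zero]
    rcases lt_or_ge s.2 r.2 with h₂ | h₂
    · rw [Nat.choose_eq_zero_of_lt h₂, mul_zero, Nat.cast_zero, zero_mul]
    have h₁ : s.1 < r.1 := not_le.1 fun h₁ => hs ⟨h₁, h₂⟩
    rw [Nat.choose_eq_zero_of_lt (by omega), zero_mul, Nat.cast_zero, zero_mul]
  rw [Finset.sum_comm, Finset.sum_congr rfl hshift, Finset.sum_comm, Finset.mul_sum]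
  refine Finset.sum_congr rfl fun s hs => ?_
  rcases lt_or_ge s.1 i with hi | hi
  · simp [hF s hi]
  · rw [← Finset.sum_mul, ← Nat.cast_sum, ← Nat.add_choose_eq]
    rw [mem_antidiagonal] at hs
    congr 3
    omega

/-- The right-hand side of the moment formula, with the vanishing term `i = 0` included. -/
def momentSum (n k : ℕ) : ℝ :=
  ∑ i ∈ Finset.range (n + 1), (n + k - i).choose k * vertexProb (n + k) i

lemma momentSum_eq_sum_range {n B : ℕ} (h : n < B) (k : ℕ) :
    momentSum n k = ∑ i ∈ Finset.range B, (n + k - i).choose k * vertexProb (n + k) i := by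
  refine Finset.sum_subset (Finset.range_mono h) fun i _ hi => ?_
  rw [Finset.mem_range, not_lt] at hi
  rcases lt_or_ge (n + k) i with hlt | hle
  · rw [vertexProb_eq_zero_of_lt hlt, mul_zero]
  · rw [Nat.choose_eq_zero_of_lt (by omega), Nat.cast_zero, zero_mul]

lemma momentSum_zero_left (k : ℕ) : momentSum 0 k = if k = 0 then 1 else 0 := by
  simp [momentSum, vertexProb_zero_right]

lemma momentSum_succ_eq (n k : ℕ) :
    momentSum (n + 1) k =
      ∑ i ∈ Finset.range (n + 1), (n + k - i).choose k * vertexProb (n + k + 1) (i + 1) := by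
  rw [momentSum, Finset.sum_range_succ', show n + 1 + k = n + k + 1 by omega,
    vertexProb_zero_right, if_neg (by omega), mul_zero, add_zero]
  simp only [Nat.add_sub_add_right]

lemma momentSum_succ (n k : ℕ) :
    momentSum (n + 1) k = 2 / ((n + k + 1) * (n + k + 2)) *
      ∑ p ∈ antidiagonal n, ∑ r ∈ antidiagonal k,
        (p.2 + r.2 + 1) * (p.2 + r.2).choose r.2 * momentSum p.1 r.1 := by
  have hgrid (i : ℕ) := sum_antidiagonal_grid_choose n k i
    (F := fun s => ((s.2 : ℝ) + 1) * vertexProb s.1 i)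
    fun s hs => by rw [vertexProb_eq_zero_of_lt hs, mul_zero]
  calc momentSum (n + 1) k
      = 2 / ((n + k + 1) * (n + k + 2)) * ∑ i ∈ Finset.range (n + 1), (n + k - i).choose k *
          ∑ s ∈ antidiagonal (n + k), (s.2 + 1) * vertexProb s.1 i := by
        rw [momentSum_succ_eq, Finset.mul_sum]
        refine Finset.sum_congr rfl fun i _ => ?_
        rw [vertexProb_succ_succ]
        push_cast
        ring
    _ = _ := by
        simp only [← hgrid]
        rw [Finset.sum_comm]
        congr 1
        refine Finset.sum_congr rfl fun p hp => ?_
        rw [Finset.sum_comm]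
        refine Finset.sum_congr rfl fun r _ => ?_
        rw [momentSum_eq_sum_range (Finset.Nat.antidiagonal.fst_lt hp), Finset.mul_sum]
        refine Finset.sum_congr rfl fun i _ => ?_
        simp only [Prod.fst_add, Prod.snd_add]
        push_cast
        ring

lemma momentSum_eq_sum_Icc {n : ℕ} (hn : 1 ≤ n) (k : ℕ) :
    momentSum n k = ∑ i ∈ Finset.Icc 1 n, ∑ l ∈ Finset.Icc i (n + k),
      (-1) ^ (l + i) * (n + k - i).choose k * (n + k).choose l * c i l := by
  rw [momentSum, Finset.range_eq_Ico, Finset.sum_eq_sum_Ico_succ_bot (by omega),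
    vertexProb_zero_right, if_neg (by omega), mul_zero, zero_add]
  refine Finset.sum_congr rfl fun i _ => ?_
  have hsub : Finset.Icc i (n + k) ⊆ Finset.range (n + k + 1) := fun l hl =>
    Finset.mem_range_succ_iff.2 (Finset.mem_Icc.1 hl).2
  rw [vertexProb, ← Finset.sum_subset hsub, Finset.mul_sum]
  · exact Finset.sum_congr rfl fun l _ => by ring
  · intro l hl hli
    rw [c_eq_zero_of_lt (by simp_all), mul_zero]

section Convexity

variable {E : Type*} [AddCommGroup E] [Module ℝ E]

lemma segment_union_segment {x y w : E} (hw : w ∈ segment ℝ x y) :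
    segment ℝ x w ∪ segment ℝ w y = segment ℝ x y := by
  rw [segment_eq_image_lineMap] at hw
  obtain ⟨t, ⟨ht₀, ht₁⟩, rfl⟩ := hw
  have himage (r s : ℝ) := image_segment ℝ (AffineMap.lineMap x y : ℝ →ᵃ[ℝ] E) r s
  have hsplit : segment ℝ 0 t ∪ segment ℝ t 1 = segment ℝ (0 : ℝ) 1 := by
    rw [segment_eq_Icc ht₀, segment_eq_Icc ht₁, segment_eq_Icc zero_le_one,
      Set.Icc_union_Icc_eq_Icc ht₀ ht₁]
  simpa only [Set.image_union, himage, AffineMap.lineMap_apply_zero, AffineMap.lineMap_apply_one]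
    using congrArg (AffineMap.lineMap x y '' ·) hsplit

lemma convexHull_triple_union_of_mem_segment (a : E) {b c w : E} (hw : w ∈ segment ℝ b c) :
    convexHull ℝ {a, b, w} ∪ convexHull ℝ {a, w, c} = convexHull ℝ {a, b, c} := by
  simp only [convexHull_insert (Set.insert_nonempty _ _), convexHull_pair, ← convexJoin_union_right,
    segment_union_segment hw]

lemma exists_mem_segment_linearMap_eq {f : E →ₗ[ℝ] ℝ} {x y : E} {r : ℝ} (hx : r ≤ f x)
    (hy : f y ≤ r) : ∃ w ∈ segment ℝ x y, f w = r := by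
  have himage : f '' segment ℝ x y = segment ℝ (f x) (f y) :=
    image_segment ℝ f.toAffineMap x y
  have hr : r ∈ segment ℝ (f x) (f y) := segment_symm ℝ (f x) (f y) ▸ Icc_subset_segment ⟨hy, hx⟩
  rwa [← himage] at hr

lemma convex_union_of_crossing {s t : Set E} (hs : Convex ℝ s) (ht : Convex ℝ t)
    (h : ∀ x ∈ s, ∀ y ∈ t, ∃ w ∈ segment ℝ x y, w ∈ s ∩ t) : Convex ℝ (s ∪ t) := by
  have hcross {x y : E} (hx : x ∈ s) (hy : y ∈ t) : segment ℝ x y ⊆ s ∪ t := by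
    obtain ⟨w, hw, hws, hwt⟩ := h x hx y hy
    rw [← segment_union_segment hw]
    exact Set.union_subset_union (hs.segment_subset hx hws) (ht.segment_subset hwt hy)
  rw [convex_iff_segment_subset]
  rintro x (hx | hx) y (hy | hy)
  · exact (hs.segment_subset hx hy).trans Set.subset_union_left
  · exact hcross hx hy
  · exact segment_symm ℝ x y ▸ hcross hy hx
  · exact (ht.segment_subset hx hy).trans Set.subset_union_right

lemma convexHull_insert_of_mem {s : Set E} {x : E} (hx : x ∈ convexHull ℝ s) :
    convexHull ℝ (insert x s) = convexHull ℝ s :=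
  (convexHull_min (Set.insert_subset hx (subset_convexHull ℝ s)) (convex_convexHull ℝ s)).antisymm
    (convexHull_mono (Set.subset_insert x s))

end Convexity

section Haar

variable {E : Type*} [NormedAddCommGroup E] [NormedSpace ℝ E] [MeasurableSpace E] [BorelSpace E]
  [FiniteDimensional ℝ E] (μ : Measure E) [μ.IsAddHaarMeasure]

lemma addHaar_setOf_linearMap_eq {f : E →ₗ[ℝ] ℝ} (hf : f ≠ 0) (r : ℝ) :
    μ {x | f x = r} = 0 := by
  rcases Set.eq_empty_or_nonempty {x | f x = r} with h | ⟨x₀, hx₀⟩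
  · rw [h, measure_empty]
  have hset : {x | f x = r} = (· + -x₀) ⁻¹' (LinearMap.ker f : Set E) := by
    ext x
    simp_all [← sub_eq_add_neg, sub_eq_zero]
  rw [hset, measure_preimage_add_right]
  exact Measure.addHaar_submodule μ _ (by rwa [ne_eq, LinearMap.ker_eq_top])

lemma addHaar_inter_eq_zero_of_le {f : E →ₗ[ℝ] ℝ} (hf : f ≠ 0) {s t : Set E} {r : ℝ}
    (hs : ∀ x ∈ s, r ≤ f x) (ht : ∀ x ∈ t, f x ≤ r) : μ (s ∩ t) = 0 :=
  measure_mono_null (fun x hx => (ht x hx.2).antisymm (hs x hx.1))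
    (addHaar_setOf_linearMap_eq μ hf r)

lemma addHaar_image_affineMap (f : E →ᵃ[ℝ] E) (s : Set E) :
    μ (f '' s) = ENNReal.ofReal |LinearMap.det f.linear| * μ s := by
  have himage : f '' s = (· + f 0) '' (f.linear '' s) := by
    rw [Set.image_image]
    exact Set.image_congr fun x _ => congrFun f.decomp x
  rw [himage, Set.image_add_right, measure_preimage_add_right, Measure.addHaar_image_linearMap]

lemma addHaar_restrict_image_affineMap (f : E →ᵃ[ℝ] E) (s : Set E) :
    μ.restrict (f '' s) = ENNReal.ofReal |LinearMap.det f.linear| • (μ.restrict s).map f := by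
  have hf : Measurable f := f.continuous_of_finiteDimensional.measurable
  ext A hA
  rw [Measure.restrict_apply hA, Measure.smul_apply, Measure.map_apply hf hA,
    Measure.restrict_apply (hf hA), ← Set.image_preimage_inter, addHaar_image_affineMap,
    smul_eq_mul]

end Haar

/-- The affine map of the plane sending `(0,0)`, `(1,0)`, `(0,1)` to `a`, `b`, `d`. -/
def triangleMap (a b d : ℝ × ℝ) : ℝ × ℝ →ᵃ[ℝ] ℝ × ℝ :=
  (Matrix.toLin (Module.Basis.finTwoProd ℝ) (Module.Basis.finTwoProd ℝ)
    !![b.1 - a.1, d.1 - a.1; b.2 - a.2, d.2 - a.2]).toAffineMap + AffineMap.const ℝ _ a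

lemma triangleMap_apply (a b d p : ℝ × ℝ) :
    triangleMap a b d p = ((b.1 - a.1) * p.1 + (d.1 - a.1) * p.2 + a.1,
      (b.2 - a.2) * p.1 + (d.2 - a.2) * p.2 + a.2) := by
  ext <;> simp [triangleMap, Matrix.toLin_finTwoProd_apply]

lemma det_linear_triangleMap (a b d : ℝ × ℝ) :
    LinearMap.det (triangleMap a b d).linear =
      (b.1 - a.1) * (d.2 - a.2) - (d.1 - a.1) * (b.2 - a.2) := by
  simp [triangleMap, LinearMap.det_toLin, Matrix.det_fin_two_of]

lemma triangleMap_image_T (a b d : ℝ × ℝ) : triangleMap a b d '' T = convexHull ℝ {a, b, d} := by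
  rw [T, AffineMap.image_convexHull]
  simp [Set.image_insert_eq, triangleMap_apply]

lemma mem_T {p : ℝ × ℝ} : p ∈ T ↔ 0 ≤ p.1 ∧ 0 ≤ p.2 ∧ p.1 + p.2 ≤ 1 := by
  constructor
  · have hconvex : Convex ℝ {p : ℝ × ℝ | 0 ≤ p.1 ∧ 0 ≤ p.2 ∧ p.1 + p.2 ≤ 1} :=
      (convex_halfSpace_ge (LinearMap.fst ℝ ℝ ℝ).isLinear 0).inter
        ((convex_halfSpace_ge (LinearMap.snd ℝ ℝ ℝ).isLinear 0).inter
          (convex_halfSpace_le (LinearMap.fst ℝ ℝ ℝ + LinearMap.snd ℝ ℝ ℝ).isLinear 1))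
    intro hp
    refine convexHull_min ?_ hconvex hp
    rintro x (rfl | rfl | rfl) <;> norm_num
  · rintro ⟨h₁, h₂, h₁₂⟩
    have hvertex (i : Fin 3) : ![((0, 0) : ℝ × ℝ), (1, 0), (0, 1)] i ∈ T :=
      subset_convexHull ℝ _ (by fin_cases i <;> simp)
    have hnonneg (i : Fin 3) : 0 ≤ ![1 - p.1 - p.2, p.1, p.2] i := by
      fin_cases i
      exacts [show 0 ≤ 1 - p.1 - p.2 by linarith, h₁, h₂]
    have hone : ∑ i, ![1 - p.1 - p.2, p.1, p.2] i = 1 := by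
      rw [Fin.sum_univ_three]
      exact show 1 - p.1 - p.2 + p.1 + p.2 = 1 by ring
    have hsum := (convex_convexHull ℝ _).sum_mem (t := Finset.univ)
      (fun i _ => hnonneg i) hone fun i _ => hvertex i
    simpa [T, Fin.sum_univ_three] using hsum

lemma convex_T : Convex ℝ T :=
  convex_convexHull ℝ _

lemma measurableSet_T : MeasurableSet T :=
  (Set.Finite.isCompact_convexHull ℝ (Set.toFinite _)).isClosed.measurableSet

/-- The convex hull of `s` and the two corners `(1,0)` and `(0,1)`. -/
def chainHull (s : Set (ℝ × ℝ)) : Set (ℝ × ℝ) :=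
  convexHull ℝ (s ∪ {(1, 0), (0, 1)})

lemma subset_chainHull (s : Set (ℝ × ℝ)) : s ⊆ chainHull s :=
  Set.subset_union_left.trans (subset_convexHull ℝ _)

lemma right_mem_chainHull (s : Set (ℝ × ℝ)) : (1, 0) ∈ chainHull s :=
  subset_convexHull ℝ _ (by simp)

lemma top_mem_chainHull (s : Set (ℝ × ℝ)) : (0, 1) ∈ chainHull s :=
  subset_convexHull ℝ _ (by simp)

lemma convex_chainHull (s : Set (ℝ × ℝ)) : Convex ℝ (chainHull s) :=
  convex_convexHull ℝ _

lemma chainHull_mono {s t : Set (ℝ × ℝ)} (h : s ⊆ t) : chainHull s ⊆ chainHull t :=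
  convexHull_mono (Set.union_subset_union_left _ h)

lemma chainHull_insert_of_mem {s : Set (ℝ × ℝ)} {p : ℝ × ℝ} (hp : p ∈ chainHull s) :
    chainHull (insert p s) = chainHull s := by
  rw [chainHull, Set.insert_union, convexHull_insert_of_mem hp, chainHull]

lemma chainHull_subset_T {s : Set (ℝ × ℝ)} (hs : s ⊆ T) : chainHull s ⊆ T := by
  refine convexHull_min (Set.union_subset hs ?_) convex_T
  rintro p (rfl | rfl) <;> norm_num [mem_T]

lemma triangleMap_image_chainHull (a b d : ℝ × ℝ) (s : Set (ℝ × ℝ)) :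
    triangleMap a b d '' chainHull s = convexHull ℝ (triangleMap a b d '' s ∪ {b, d}) := by
  rw [chainHull, AffineMap.image_convexHull, Set.image_union]
  simp [Set.image_insert_eq, triangleMap_apply]

/-- The affine map fixing the corners `(1,0)`, `(0,1)` and sending the origin to `a`. -/
def cornerMap (a : ℝ × ℝ) : ℝ × ℝ →ᵃ[ℝ] ℝ × ℝ := triangleMap a (1, 0) (0, 1)

/-- The contraction `(u, v) ↦ (u, y v)`. -/
def squeezeMap (y : ℝ) : ℝ × ℝ →ᵃ[ℝ] ℝ × ℝ := triangleMap (0, 0) (1, 0) (0, y)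

lemma cornerMap_apply (a p : ℝ × ℝ) :
    cornerMap a p = (p.1 + a.1 * (1 - p.1 - p.2), p.2 + a.2 * (1 - p.1 - p.2)) := by
  rw [cornerMap, triangleMap_apply]
  ext <;> ring

lemma squeezeMap_apply (y : ℝ) (p : ℝ × ℝ) : squeezeMap y p = (p.1, y * p.2) := by
  simp [squeezeMap, triangleMap_apply]

lemma cornerMap_image_T (a : ℝ × ℝ) : cornerMap a '' T = chainHull {a} :=
  triangleMap_image_T a _ _

lemma cornerMap_image_chainHull (a : ℝ × ℝ) (s : Set (ℝ × ℝ)) :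
    cornerMap a '' chainHull s = chainHull (cornerMap a '' s) :=
  triangleMap_image_chainHull a _ _ s

lemma det_linear_cornerMap (a : ℝ × ℝ) : LinearMap.det (cornerMap a).linear = 1 - a.1 - a.2 := by
  rw [cornerMap, det_linear_triangleMap]
  ring

lemma det_linear_squeezeMap (y : ℝ) : LinearMap.det (squeezeMap y).linear = y := by
  rw [squeezeMap, det_linear_triangleMap]
  ring

/-- The linear functional `(u, v) ↦ a u + b v`. -/
def linForm (a b : ℝ) : ℝ × ℝ →ₗ[ℝ] ℝ := a • LinearMap.fst ℝ ℝ ℝ + b • LinearMap.snd ℝ ℝ ℝ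

lemma linForm_apply (a b : ℝ) (p : ℝ × ℝ) : linForm a b p = a * p.1 + b * p.2 := rfl

lemma linForm_ne_zero_left {a : ℝ} (ha : a ≠ 0) (b : ℝ) : linForm a b ≠ 0 := fun h =>
  ha (by simpa [linForm_apply] using DFunLike.congr_fun h (1, 0))

lemma linForm_ne_zero_right (a : ℝ) {b : ℝ} (hb : b ≠ 0) : linForm a b ≠ 0 := fun h =>
  hb (by simpa [linForm_apply] using DFunLike.congr_fun h (0, 1))

lemma mk_zero_mem_segment {z : ℝ} (hz : z ∈ Set.Icc (0 : ℝ) 1) :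
    ((z, 0) : ℝ × ℝ) ∈ segment ℝ (0, 0) (1, 0) :=
  ⟨1 - z, z, sub_nonneg.2 hz.2, hz.1, by ring, by simp⟩

lemma zero_mk_mem_segment {y : ℝ} (hy : y ∈ Set.Icc (0 : ℝ) 1) :
    ((0, y) : ℝ × ℝ) ∈ segment ℝ (0, 0) (0, 1) :=
  ⟨1 - y, y, sub_nonneg.2 hy.2, hy.1, by ring, by simp⟩

section Slice

variable {z : ℝ}

lemma le_linForm_of_mem_chainHull_bottom (hz : z ∈ Set.Icc (0 : ℝ) 1) :
    ∀ p ∈ chainHull {(z, 0)}, z ≤ linForm 1 z p := by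
  refine fun p hp => convexHull_min ?_ (convex_halfSpace_ge (linForm 1 z).isLinear z) hp
  rintro p (rfl | rfl | rfl) <;> simp [linForm_apply, hz.2]

lemma T_inter_le_linForm_ae_eq (hz : z ∈ Set.Icc (0 : ℝ) 1) :
    (T ∩ {p | z ≤ linForm 1 z p} : Set (ℝ × ℝ)) =ᵐ[volume] chainHull {(z, 0)} := by
  set S : Set (ℝ × ℝ) := convexHull ℝ {(0, 1), (0, 0), (z, 0)}
  have hunion : S ∪ chainHull {(z, 0)} = T := by
    have h := convexHull_triple_union_of_mem_segment (0, 1) (mk_zero_mem_segment hz)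
    rwa [Set.insert_comm _ (0, 0) {(1, 0)}, Set.insert_comm _ _ {(1, 0)},
      Set.pair_comm _ (1, 0)] at h
  have hle : ∀ p ∈ S, linForm 1 z p ≤ z := by
    refine fun p hp => convexHull_min ?_ (convex_halfSpace_le (linForm 1 z).isLinear z) hp
    rintro p (rfl | rfl | rfl) <;> simp [linForm_apply, hz.1]
  refine ae_eq_set.2 ⟨measure_mono_null ?_ (addHaar_inter_eq_zero_of_le volume
    (linForm_ne_zero_left one_ne_zero z) (fun p hp => hp) hle), ?_⟩
  · rintro p ⟨⟨hpT, hp⟩, hpU⟩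
    exact ⟨hp, (hunion ▸ hpT).resolve_right hpU⟩
  · rw [Set.sdiff_eq_empty.2, measure_empty]
    exact fun p hp => ⟨hunion ▸ .inr hp, le_linForm_of_mem_chainHull_bottom hz p hp⟩

end Slice

section Split

variable {y : ℝ}

lemma chainHull_union_squeezeMap_image_T (hy : y ∈ Set.Icc (0 : ℝ) 1) :
    chainHull {(0, y)} ∪ squeezeMap y '' T = T := by
  have hunion := convexHull_triple_union_of_mem_segment (1, 0) (zero_mk_mem_segment hy)
  rw [squeezeMap, triangleMap_image_T, Set.union_comm, Set.insert_comm (0, 0), T,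
    Set.insert_comm (0, 0), ← hunion, Set.insert_comm (1, 0) (0, y) {(0, 1)}]
  rfl

lemma le_linForm_of_mem_chainHull_left (hy : y ∈ Set.Icc (0 : ℝ) 1) :
    ∀ p ∈ chainHull {(0, y)}, y ≤ linForm y 1 p := by
  refine fun p hp => convexHull_min ?_ (convex_halfSpace_ge (linForm y 1).isLinear y) hp
  rintro p (rfl | rfl | rfl) <;> simp [linForm_apply, hy.2]

lemma linForm_le_of_mem_squeezeMap_image (hy : y ∈ Set.Icc (0 : ℝ) 1) :
    ∀ p ∈ squeezeMap y '' T, linForm y 1 p ≤ y := by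
  rintro _ ⟨p, hp, rfl⟩
  rw [linForm_apply, squeezeMap_apply]
  nlinarith [(mem_T.1 hp).2.2, hy.1]

lemma volume_chainHull_inter_squeezeMap_image_T (hy : y ∈ Set.Icc (0 : ℝ) 1) :
    volume (chainHull {(0, y)} ∩ squeezeMap y '' T) = 0 :=
  addHaar_inter_eq_zero_of_le volume (linForm_ne_zero_right y one_ne_zero)
    (le_linForm_of_mem_chainHull_left hy) (linForm_le_of_mem_squeezeMap_image hy)

lemma convex_chainHull_union_squeezeMap_image (hy : y ∈ Set.Icc (0 : ℝ) 1) {s : Set (ℝ × ℝ)}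
    (hs : s ⊆ T) :
    Convex ℝ (chainHull {(0, y)} ∪ squeezeMap y '' chainHull s) := by
  have hK : squeezeMap y '' chainHull s ⊆ squeezeMap y '' T :=
    Set.image_mono (chainHull_subset_T hs)
  have hconvex := (convex_chainHull s).affine_image (squeezeMap y)
  refine convex_union_of_crossing (convex_chainHull _) hconvex fun p hp r hr => ?_
  obtain ⟨w, hw, hwy⟩ := exists_mem_segment_linearMap_eq (le_linForm_of_mem_chainHull_left hy p hp)
    (linForm_le_of_mem_squeezeMap_image hy r (hK hr))
  have hwT : w ∈ T := by
    have hT := chainHull_union_squeezeMap_image_T hy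
    exact convex_T.segment_subset (hT.subset (.inl hp)) (hT.subset (.inr (hK hr))) hw
  have hedge : w ∈ segment ℝ ((1, 0) : ℝ × ℝ) (0, y) := by
    rw [mem_T] at hwT
    rw [linForm_apply] at hwy
    refine ⟨w.1, 1 - w.1, hwT.1, by linarith, by ring, ?_⟩
    ext <;> simp only [Prod.smul_mk, smul_eq_mul, mul_one, mul_zero, Prod.mk_add_mk, add_zero,
      zero_add]
    linarith
  exact ⟨w, hw, (convex_chainHull _).segment_subset (right_mem_chainHull _)
    (subset_chainHull {(0, y)} rfl) hedge, hconvex.segment_subset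
    ⟨_, right_mem_chainHull s, by simp [squeezeMap_apply]⟩
    ⟨_, top_mem_chainHull s, by simp [squeezeMap_apply]⟩ hedge⟩

lemma chainHull_insert_squeezeMap_image (hy : y ∈ Set.Icc (0 : ℝ) 1) {s : Set (ℝ × ℝ)}
    (hs : s ⊆ T) :
    chainHull (insert (0, y) (squeezeMap y '' s)) =
      chainHull {(0, y)} ∪ squeezeMap y '' chainHull s := by
  refine (convexHull_min ?_ (convex_chainHull_union_squeezeMap_image hy hs)).antisymm
    (Set.union_subset (chainHull_mono (by simp)) ?_)
  · rintro p ((rfl | ⟨p, hp, rfl⟩) | rfl | rfl)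
    · exact .inl (subset_chainHull _ rfl)
    · exact .inr ⟨p, subset_chainHull s hp, rfl⟩
    · exact .inl (right_mem_chainHull _)
    · exact .inl (top_mem_chainHull _)
  · rw [squeezeMap, triangleMap_image_chainHull]
    refine convexHull_mono ?_
    rintro p (hp | rfl | rfl)
    · exact .inl (.inr hp)
    · exact .inr (.inl rfl)
    · exact .inl (.inl rfl)

end Split

section Integrals

lemma lintegral_μT {f : ℝ × ℝ → ℝ≥0∞} (hf : Measurable f) : ∫⁻ p, f p ∂μT =
    2 * ∫⁻ y in Set.Ioo (0 : ℝ) 1, ∫⁻ x in Set.Icc (0 : ℝ) (1 - y), f (x, y) := by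
  have hslice (x y : ℝ) : T.indicator f (x, y) = (Set.Icc (0 : ℝ) 1).indicator
      (fun y => (Set.Icc (0 : ℝ) (1 - y)).indicator (fun x => f (x, y)) x) y := by
    simp only [Set.indicator, mem_T, Set.mem_Icc]
    grind
  rw [μT, lintegral_smul_measure, ← lintegral_indicator measurableSet_T, Measure.volume_eq_prod,
    lintegral_prod_symm _ (hf.indicator measurableSet_T).aemeasurable,
    Measure.restrict_congr_set Ioo_ae_eq_Icc, ← lintegral_indicator measurableSet_Icc, smul_eq_mul]
  congr 1
  refine lintegral_congr fun y => ?_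
  by_cases hy : y ∈ Set.Icc (0 : ℝ) 1 <;> simp [hslice, hy, lintegral_indicator]

lemma setLIntegral_one_sub_div_pow {s : ℝ} (hs : 0 < s) (N : ℕ) :
    ∫⁻ x in Set.Icc 0 s, ENNReal.ofReal (1 - x / s) ^ N = ENNReal.ofReal (s / (N + 1)) := by
  have hpos : ∀ x ∈ Set.Icc 0 s, 0 ≤ 1 - x / s := fun x hx =>
    sub_nonneg.2 ((div_le_one hs).2 hx.2)
  have hint : ∫ x in Set.Icc 0 s, (1 - x / s) ^ N = s / (N + 1) := by
    rw [integral_Icc_eq_integral_Ioc, ← intervalIntegral.integral_of_le hs.le,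
      intervalIntegral.integral_comp_sub_div (· ^ N) hs.ne', div_self hs.ne']
    simp [div_eq_mul_inv]
  rw [← hint, ofReal_integral_eq_lintegral_ofReal
    (Continuous.integrableOn_Icc (by fun_prop))
    (ae_restrict_of_forall_mem measurableSet_Icc fun x hx => pow_nonneg (hpos x hx) N)]
  exact setLIntegral_congr_fun measurableSet_Icc fun x hx => (ENNReal.ofReal_pow (hpos x hx) N).symm

lemma setLIntegral_one_sub_pow_mul_pow (a b : ℕ) :
    ∫⁻ y in Set.Ioo (0 : ℝ) 1, ENNReal.ofReal (1 - y) ^ a * ENNReal.ofReal y ^ b =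
      ENNReal.ofReal (a.factorial * b.factorial / (a + b + 1).factorial) := by
  have hbeta : ProbabilityTheory.beta (b + 1) (a + 1) =
      a.factorial * b.factorial / (a + b + 1).factorial := by
    have hsum : (b + 1 + (a + 1) : ℝ) = ↑(a + b + 1) + 1 := by push_cast; ring
    rw [ProbabilityTheory.beta, hsum, Real.Gamma_nat_eq_factorial, Real.Gamma_nat_eq_factorial,
      Real.Gamma_nat_eq_factorial, mul_comm (b.factorial : ℝ)]
  have hpos : 0 < ProbabilityTheory.beta (b + 1) (a + 1) :=
    ProbabilityTheory.beta_pos (by positivity) (by positivity)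
  have hpdf : ENNReal.ofReal (ProbabilityTheory.beta (b + 1) (a + 1))⁻¹ *
      ∫⁻ y in Set.Ioo (0 : ℝ) 1, ENNReal.ofReal (1 - y) ^ a * ENNReal.ofReal y ^ b = 1 := by
    rw [← ProbabilityTheory.lintegral_betaPDF_eq_one (α := b + 1) (β := a + 1) (by positivity)
      (by positivity), ProbabilityTheory.lintegral_betaPDF, ← lintegral_const_mul _ (by fun_prop)]
    refine setLIntegral_congr_fun measurableSet_Ioo fun y hy => ?_
    have hy' : 0 ≤ 1 - y := sub_nonneg.2 hy.2.le
    simp only [add_sub_cancel_right, Real.rpow_natCast, one_div]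
    rw [← ENNReal.ofReal_pow hy', ← ENNReal.ofReal_pow hy.1.le,
      ← ENNReal.ofReal_mul (by positivity), ← ENNReal.ofReal_mul (by positivity)]
    congr 1
    ring
  rw [ENNReal.ofReal_inv_of_pos hpos] at hpdf
  rw [← hbeta, ← inv_inv (ENNReal.ofReal _)]
  exact ENNReal.eq_inv_of_mul_eq_one_left ((mul_comm _ _).trans hpdf)

/-- The abscissa at which the line through `(0,1)` and `p` meets the axis `v = 0`. -/
def baseProj (p : ℝ × ℝ) : ℝ := p.1 / (1 - p.2)

@[fun_prop]
lemma measurable_baseProj : Measurable baseProj := by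
  unfold baseProj
  fun_prop

lemma lintegral_one_sub_baseProj_pow_mul (N : ℕ) {g : ℝ → ℝ≥0∞} (hg : Measurable g) :
    ∫⁻ p, ENNReal.ofReal (1 - baseProj p) ^ N * g p.2 ∂μT =
      ENNReal.ofReal (2 / (N + 1)) * ∫⁻ y in Set.Ioo (0 : ℝ) 1, ENNReal.ofReal (1 - y) * g y := by
  have hinner : ∀ y ∈ Set.Ioo (0 : ℝ) 1,
      ∫⁻ x in Set.Icc 0 (1 - y), ENNReal.ofReal (1 - baseProj (x, y)) ^ N * g y =
        ENNReal.ofReal (1 / (N + 1)) * (ENNReal.ofReal (1 - y) * g y) := by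
    intro y hy
    rw [lintegral_mul_const _ (by fun_prop), ← mul_assoc,
      ← ENNReal.ofReal_mul (by positivity), one_div_mul_eq_div]
    exact congrArg (· * g y) (setLIntegral_one_sub_div_pow (sub_pos.2 hy.2) N)
  rw [lintegral_μT (by fun_prop), setLIntegral_congr_fun measurableSet_Ioo hinner,
    lintegral_const_mul _ (by fun_prop), ← mul_assoc, ← ENNReal.ofReal_ofNat 2,
    ← ENNReal.ofReal_mul zero_le_two, mul_one_div]

instance isProbabilityMeasure_μT : IsProbabilityMeasure μT := by
  constructor
  have hone := lintegral_one_sub_baseProj_pow_mul 0 measurable_one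
  have hbeta := setLIntegral_one_sub_pow_mul_pow 1 0
  simp only [pow_zero, pow_one, mul_one, Pi.one_apply, lintegral_one] at hone hbeta
  rw [hone, hbeta, ← ENNReal.ofReal_mul (by positivity)]
  norm_num [Nat.factorial]

lemma two_mul_volume_T : 2 * volume T = 1 := by
  simpa [μT] using measure_univ (μ := μT)

end Integrals

section UniformMeasure

lemma ae_mem_T : ∀ᵐ p ∂μT, p ∈ T :=
  Measure.ae_smul_measure (ae_restrict_mem measurableSet_T) 2

lemma μT_absolutelyContinuous : μT ≪ volume :=
  Measure.restrict_le_self.absolutelyContinuous.smul_left 2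

lemma μT_setOf_linForm_eq {a b : ℝ} (h : linForm a b ≠ 0) (r : ℝ) :
    μT {p | linForm a b p = r} = 0 :=
  μT_absolutelyContinuous (addHaar_setOf_linearMap_eq volume h r)

lemma ae_snd_ne_one : ∀ᵐ p ∂μT, p.2 ≠ 1 := by
  refine ae_iff.2 (measure_mono_null (fun p hp => ?_)
    (μT_setOf_linForm_eq (linForm_ne_zero_right 0 one_ne_zero) 1))
  simpa [linForm_apply] using hp

lemma le_baseProj_iff {p : ℝ × ℝ} (hp : p.2 < 1) (r : ℝ) :
    r ≤ baseProj p ↔ r ≤ linForm 1 r p := by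
  rw [baseProj, le_div_iff₀ (sub_pos.2 hp), linForm_apply]
  constructor <;> intro h <;> linarith

lemma μT_setOf_baseProj_eq (r : ℝ) : μT {p | baseProj p = r} = 0 := by
  have hline : ∀ᵐ p ∂μT, linForm 1 r p ≠ r :=
    ae_iff.2 (by simpa using μT_setOf_linForm_eq (linForm_ne_zero_left one_ne_zero r) r)
  refine measure_eq_zero_iff_ae_notMem.2 ?_
  filter_upwards [hline, ae_snd_ne_one] with p hp hp₂ heq
  rw [baseProj, div_eq_iff (sub_ne_zero.2 hp₂.symm)] at heq
  refine hp ?_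
  rw [linForm_apply, heq]
  ring

lemma baseProj_mem_Icc {p : ℝ × ℝ} (hp : p ∈ T) : baseProj p ∈ Set.Icc (0 : ℝ) 1 := by
  obtain ⟨h₁, -, h₁₂⟩ := mem_T.1 hp
  exact ⟨div_nonneg h₁ (by linarith), div_le_one_of_le₀ (by linarith) (by linarith)⟩

lemma cornerMap_baseProj {p : ℝ × ℝ} (hp : p.2 ≠ 1) : cornerMap (baseProj p, 0) (0, p.2) = p := by
  have := sub_ne_zero.2 hp.symm
  rw [cornerMap_apply, baseProj]
  ext <;> simp [this]

lemma restrict_μT_image {f : ℝ × ℝ →ᵃ[ℝ] ℝ × ℝ} (hf : f '' T ⊆ T) :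
    μT.restrict (f '' T) = ENNReal.ofReal |LinearMap.det f.linear| • μT.map f := by
  rw [μT, Measure.restrict_smul, Measure.restrict_restrict_of_subset hf,
    addHaar_restrict_image_affineMap, Measure.map_smul, smul_comm]

lemma restrict_μT_le_baseProj {z : ℝ} (hz : z ∈ Set.Icc (0 : ℝ) 1) :
    μT.restrict {p | z ≤ baseProj p} = ENNReal.ofReal (1 - z) • μT.map (cornerMap (z, 0)) := by
  have hsub : cornerMap (z, 0) '' T ⊆ T := by
    rw [cornerMap_image_T]
    exact chainHull_subset_T (by simpa [mem_T] using hz)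
  have hdet : ENNReal.ofReal |LinearMap.det (cornerMap (z, 0)).linear| =
      ENNReal.ofReal (1 - z) := by
    rw [det_linear_cornerMap, sub_zero, abs_of_nonneg (sub_nonneg.2 hz.2)]
  rw [← hdet, ← restrict_μT_image hsub, cornerMap_image_T]
  refine Measure.restrict_congr_set ?_
  filter_upwards [μT_absolutelyContinuous.ae_le (T_inter_le_linForm_ae_eq hz), ae_mem_T,
    ae_snd_ne_one] with p hp hpT hp₂
  have hlt : p.2 < 1 := lt_of_le_of_ne (by linarith [(mem_T.1 hpT).1, (mem_T.1 hpT).2.2]) hp₂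
  rw [← hp]
  exact propext ((le_baseProj_iff hlt z).trans (and_iff_right hpT).symm)

lemma restrict_μT_add_smul_map_squeezeMap {y : ℝ} (hy : y ∈ Set.Icc (0 : ℝ) 1) :
    μT.restrict (chainHull {(0, y)}) + ENNReal.ofReal y • μT.map (squeezeMap y) = μT := by
  have hunion := chainHull_union_squeezeMap_image_T hy
  have hmeas : NullMeasurableSet (squeezeMap y '' T) μT :=
    ((convex_T.affine_image (squeezeMap y)).nullMeasurableSet volume).mono_ac
      μT_absolutelyContinuous
  have hdet : ENNReal.ofReal |LinearMap.det (squeezeMap y).linear| = ENNReal.ofReal y := by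
    rw [det_linear_squeezeMap, abs_of_nonneg hy.1]
  rw [← hdet, ← restrict_μT_image (Set.subset_union_right.trans hunion.subset),
    ← Measure.restrict_union₀ (μT_absolutelyContinuous
      (volume_chainHull_inter_squeezeMap_image_T hy)) hmeas, hunion]
  exact Measure.restrict_eq_self_of_ae_mem ae_mem_T

end UniformMeasure

section Area

/-- The area of `chainHull s`, normalized so that `T` has area `1`. -/
def chainArea (s : Set (ℝ × ℝ)) : ℝ≥0∞ := 2 * volume (chainHull s)

lemma chainArea_le_one {s : Set (ℝ × ℝ)} (hs : s ⊆ T) : chainArea s ≤ 1 := by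
  rw [chainArea, ← two_mul_volume_T]
  gcongr
  exact chainHull_subset_T hs

lemma μT_chainHull {s : Set (ℝ × ℝ)} (hs : s ⊆ T) : μT (chainHull s) = chainArea s := by
  rw [μT, Measure.smul_apply, Measure.restrict_eq_self _ (chainHull_subset_T hs), chainArea,
    smul_eq_mul]

lemma chainArea_empty : chainArea ∅ = 0 := by
  refine mul_eq_zero_of_right 2 (measure_mono_null (fun p hp => ?_)
    (addHaar_setOf_linearMap_eq volume (linForm_ne_zero_left one_ne_zero 1) 1))
  refine convexHull_min ?_ (convex_hyperplane (linForm 1 1).isLinear 1) hp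
  rw [Set.empty_union]
  rintro p (rfl | rfl) <;> simp [linForm_apply]

lemma chainArea_image_cornerMap (a : ℝ × ℝ) (s : Set (ℝ × ℝ)) :
    chainArea (cornerMap a '' s) = ENNReal.ofReal |1 - a.1 - a.2| * chainArea s := by
  rw [chainArea, ← cornerMap_image_chainHull, addHaar_image_affineMap, det_linear_cornerMap,
    chainArea, mul_left_comm]

lemma chainArea_singleton (a : ℝ × ℝ) : chainArea {a} = ENNReal.ofReal |1 - a.1 - a.2| := by
  rw [chainArea, ← cornerMap_image_T, addHaar_image_affineMap, det_linear_cornerMap, mul_left_comm,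
    two_mul_volume_T, mul_one]

lemma chainArea_insert_image_squeezeMap {y : ℝ} (hy : y ∈ Set.Icc (0 : ℝ) 1) {s : Set (ℝ × ℝ)}
    (hs : s ⊆ T) : chainArea (insert (0, y) (squeezeMap y '' s)) =
      ENNReal.ofReal (1 - y) + ENNReal.ofReal y * chainArea s := by
  have hmeas : NullMeasurableSet (squeezeMap y '' chainHull s) volume :=
    ((convex_chainHull s).affine_image _).nullMeasurableSet volume
  have hnull : volume (chainHull {(0, y)} ∩ squeezeMap y '' chainHull s) = 0 :=
    measure_mono_null (Set.inter_subset_inter_right _ (Set.image_mono (chainHull_subset_T hs)))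
      (volume_chainHull_inter_squeezeMap_image_T hy)
  rw [chainArea, chainHull_insert_squeezeMap_image hy hs, measure_union₀ hmeas hnull, mul_add,
    ← chainArea, chainArea_singleton, addHaar_image_affineMap, det_linear_squeezeMap,
    abs_of_nonneg hy.1, sub_zero, abs_of_nonneg (sub_nonneg.2 hy.2), mul_left_comm, ← chainArea]

lemma chainArea_insert_of_mem {s : Set (ℝ × ℝ)} {p : ℝ × ℝ} (hp : p ∈ chainHull s) :
    chainArea (insert p s) = chainArea s := by
  rw [chainArea, chainHull_insert_of_mem hp, chainArea]

lemma isClosed_setOf_mem_convexHull_range {E ι : Type*} [AddCommGroup E] [Module ℝ E]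
    [TopologicalSpace E] [ContinuousAdd E] [ContinuousSMul ℝ E] [T2Space E] [Finite ι] :
    IsClosed {p : (ι → E) × E | p.2 ∈ convexHull ℝ (Set.range p.1)} := by
  classical
  have := Fintype.ofFinite ι
  have hhull (v : ι → E) : convexHull ℝ (Set.range v) =
      (fun w => ∑ i, w i • v i) '' stdSimplex ℝ ι := by
    have himage := (Fintype.linearCombination ℝ v).image_convexHull
      (Set.range fun i => Pi.single i (1 : ℝ))
    rw [convexHull_rangle_single_eq_stdSimplex, ← Set.range_comp] at himage
    simp only [Function.comp_def, Fintype.linearCombination_apply_single, one_smul] at himage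
    exact himage.symm
  have hclosed : IsClosed {p : stdSimplex ℝ ι × ((ι → E) × E) |
      ∑ i, p.1.1 i • p.2.1 i = p.2.2} :=
    isClosed_eq (continuous_finsetSum _ fun i _ =>
      ((continuous_apply i).comp (continuous_subtype_val.comp continuous_fst)).smul (by fun_prop))
      (by fun_prop)
  have := isCompact_iff_compactSpace.1 (isCompact_stdSimplex ℝ ι)
  convert isClosedMap_snd_of_compactSpace _ hclosed using 1
  ext p
  simp [hhull]

lemma measurable_chainArea_range (n : ℕ) :
    Measurable fun ω : Fin n → ℝ × ℝ => chainArea (Set.range ω) := by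
  have hrange (ω : Fin n → ℝ × ℝ) : Set.range ω ∪ {(1, 0), (0, 1)} =
      Set.range (Sum.elim ω ![((1, 0) : ℝ × ℝ), (0, 1)]) := by
    rw [Set.Sum.elim_range, Matrix.range_cons_cons_empty]
  have hcont : Continuous fun p : (Fin n → ℝ × ℝ) × (ℝ × ℝ) =>
      (Sum.elim p.1 ![((1, 0) : ℝ × ℝ), (0, 1)], p.2) := by
    refine .prodMk (continuous_pi ?_) continuous_snd
    rintro (i | i) <;> simp only [Sum.elim_inl, Sum.elim_inr] <;> fun_prop
  have hclosed : IsClosed {p : (Fin n → ℝ × ℝ) × (ℝ × ℝ) | p.2 ∈ chainHull (Set.range p.1)} := by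
    simp only [chainHull, hrange]
    exact isClosed_setOf_mem_convexHull_range.preimage hcont
  exact (measurable_measure_prodMk_left hclosed.measurableSet).const_mul 2

end Area

section Moments

/-- The `k`-th moment of the normalized area of the convex chain of `n` points. -/
def areaMoment (n k : ℕ) : ℝ≥0∞ := ∫⁻ ω, chainArea (Set.range ω) ^ k ∂P n

lemma ae_range_subset_T (n : ℕ) : ∀ᵐ ω ∂P n, Set.range ω ⊆ T := by
  have h (i : Fin n) : ∀ᵐ ω ∂P n, ω i ∈ T := Measure.tendsto_eval_ae_ae.eventually ae_mem_T
  filter_upwards [ae_all_iff.2 h] with ω hω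
  exact Set.range_subset_iff.2 hω

instance isProbabilityMeasure_P (n : ℕ) : IsProbabilityMeasure (P n) := by
  unfold P
  infer_instance

lemma areaMoment_ne_top (n k : ℕ) : areaMoment n k ≠ ∞ := by
  refine ne_top_of_le_ne_top ENNReal.one_ne_top (?_ : areaMoment n k ≤ 1)
  calc areaMoment n k ≤ ∫⁻ _, 1 ∂P n := by
        refine lintegral_mono_ae ?_
        filter_upwards [ae_range_subset_T n] with ω hω
        exact pow_le_one₀ zero_le (chainArea_le_one hω)
    _ = 1 := by simp

lemma q_eq_choose_mul_areaMoment (n k : ℕ) :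
    q n k = (n + k).choose k * (areaMoment n k).toReal := by
  rw [q, areaMoment, ← integral_toReal ((measurable_chainArea_range n).pow_const k).aemeasurable]
  · simp only [ENNReal.toReal_pow, chainArea, ENNReal.toReal_mul, ENNReal.toReal_ofNat]
    rfl
  · filter_upwards [ae_range_subset_T n] with ω hω
    exact (pow_le_one₀ zero_le (chainArea_le_one hω)).trans_lt ENNReal.one_lt_top

lemma areaMoment_zero_left (k : ℕ) : areaMoment 0 k = if k = 0 then 1 else 0 := by
  simp [areaMoment, chainArea_empty, zero_pow_eq]

lemma measurable_chainArea_insert_range (n : ℕ) :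
    Measurable fun p : (ℝ × ℝ) × (Fin n → ℝ × ℝ) => chainArea (insert p.1 (Set.range p.2)) :=
  measurable_insert_range (measurable_chainArea_range _)

lemma lintegral_chainArea_insert_eq_rescale {p : ℝ × ℝ} (hp : p ∈ T) (hp₂ : p.2 ≠ 1) (n k : ℕ) :
    ∫⁻ ω, chainArea (insert p (Set.range ω)) ^ k
        ∂Measure.pi (fun _ : Fin n => μT.restrict {z | baseProj p ≤ baseProj z}) =
      ENNReal.ofReal (1 - baseProj p) ^ (n + k) *
        ∫⁻ ω, chainArea (insert (0, p.2) (Set.range ω)) ^ k ∂P n := by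
  have hz := baseProj_mem_Icc hp
  have hmeas (x : ℝ × ℝ) (m : ℕ) :
      Measurable fun ω : Fin m → ℝ × ℝ => chainArea (insert x (Set.range ω)) ^ k :=
    ((measurable_chainArea_insert_range m).comp measurable_prodMk_left).pow_const k
  have himage (s : Set (ℝ × ℝ)) :
      chainArea (insert p (cornerMap (baseProj p, 0) '' s)) =
        ENNReal.ofReal (1 - baseProj p) * chainArea (insert (0, p.2) s) := by
    have hinsert : insert p (cornerMap (baseProj p, 0) '' s) =
        cornerMap (baseProj p, 0) '' insert (0, p.2) s := by
      rw [Set.image_insert_eq, cornerMap_baseProj hp₂]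
    rw [hinsert, chainArea_image_cornerMap, sub_zero, abs_of_nonneg (sub_nonneg.2 hz.2)]
  rw [restrict_μT_le_baseProj hz, lintegral_pi_smul_map μT
    (cornerMap _).continuous_of_finiteDimensional.measurable ENNReal.ofReal_ne_top n
    (F := fun s => chainArea (insert p s) ^ k) (hmeas p n)]
  simp only [himage, mul_pow]
  rw [lintegral_const_mul _ (hmeas _ n), ← mul_assoc, ← pow_add]
  rfl

lemma areaMoment_succ_eq_lintegral (n k : ℕ) : areaMoment (n + 1) k =
    (n + 1) * (ENNReal.ofReal (2 / (n + k + 1)) *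
      ∫⁻ y in Set.Ioo (0 : ℝ) 1, ENNReal.ofReal (1 - y) *
        ∫⁻ ω, chainArea (insert (0, y) (Set.range ω)) ^ k ∂P n) := by
  have hmeas : Measurable fun y : ℝ => ∫⁻ ω, chainArea (insert (0, y) (Set.range ω)) ^ k ∂P n :=
    ((measurable_chainArea_insert_range n).pow_const k).lintegral_prod_right'.comp
      measurable_prodMk_left
  rw [areaMoment, P, lintegral_pi_eq_lintegral_min measurable_baseProj μT_setOf_baseProj_eq
    (F := fun s => chainArea s ^ k) ((measurable_chainArea_range _).pow_const k),
    ← Nat.cast_add n k, ← lintegral_one_sub_baseProj_pow_mul (n + k) hmeas]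
  congr 1
  refine lintegral_congr_ae ?_
  filter_upwards [ae_mem_T, ae_snd_ne_one] with p hp hp₂
  exact lintegral_chainArea_insert_eq_rescale hp hp₂ n k

lemma lintegral_chainArea_insert_image_squeezeMap {y : ℝ} (hy : y ∈ Set.Icc (0 : ℝ) 1) (n k : ℕ) :
    ∫⁻ ω, chainArea (insert (0, y) (squeezeMap y '' Set.range ω)) ^ k ∂P n =
      ∑ r ∈ antidiagonal k, k.choose r.1 * areaMoment n r.1 *
        (ENNReal.ofReal (1 - y) ^ r.2 * ENNReal.ofReal y ^ r.1) := by
  have hmeas (j : ℕ) : Measurable fun ω : Fin n → ℝ × ℝ => chainArea (Set.range ω) ^ j :=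
    (measurable_chainArea_range n).pow_const j
  calc ∫⁻ ω, chainArea (insert (0, y) (squeezeMap y '' Set.range ω)) ^ k ∂P n
      = ∫⁻ ω, ∑ r ∈ antidiagonal k, (k.choose r.1 *
          (ENNReal.ofReal (1 - y) ^ r.2 * ENNReal.ofReal y ^ r.1)) *
            chainArea (Set.range ω) ^ r.1 ∂P n := by
        refine lintegral_congr_ae ?_
        filter_upwards [ae_range_subset_T n] with ω hω
        rw [chainArea_insert_image_squeezeMap hy hω, add_comm, (Commute.all _ _).add_pow']
        refine Finset.sum_congr rfl fun r _ => ?_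
        rw [mul_pow, nsmul_eq_mul]
        ring
    _ = _ := by
        rw [lintegral_finsetSum _ fun r _ => (hmeas r.1).const_mul _]
        refine Finset.sum_congr rfl fun r _ => ?_
        rw [lintegral_const_mul _ (hmeas r.1), areaMoment]
        ring

lemma lintegral_chainArea_insert {y : ℝ} (hy : y ∈ Set.Icc (0 : ℝ) 1) (n k : ℕ) :
    ∫⁻ ω, chainArea (insert (0, y) (Set.range ω)) ^ k ∂P n =
      ∑ p ∈ antidiagonal n, ∑ r ∈ antidiagonal k,
        n.choose p.1 * k.choose r.1 * areaMoment p.1 r.1 *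
          (ENNReal.ofReal (1 - y) ^ (p.2 + r.2) * ENNReal.ofReal y ^ (p.1 + r.1)) := by
  have hyT : {((0, y) : ℝ × ℝ)} ⊆ T := by simpa [mem_T] using hy
  have hF (m : ℕ) : Measurable fun ω : Fin m → ℝ × ℝ =>
      chainArea (insert (0, y) (Set.range ω)) ^ k :=
    ((measurable_chainArea_insert_range m).comp measurable_prodMk_left).pow_const k
  have habsorb : ∀ᵐ z ∂μT.restrict (chainHull {(0, y)}), ∀ s : Set (ℝ × ℝ),
      chainArea (insert (0, y) (insert z s)) ^ k = chainArea (insert (0, y) s) ^ k := by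
    have hnull : NullMeasurableSet (chainHull {(0, y)}) μT :=
      ((convex_chainHull _).nullMeasurableSet volume).mono_ac μT_absolutelyContinuous
    filter_upwards [ae_restrict_mem₀ hnull] with z hz s
    rw [Set.insert_comm, chainArea_insert_of_mem (chainHull_mono (by simp) hz)]
  have hmass : μT.restrict (chainHull {(0, y)}) Set.univ = ENNReal.ofReal (1 - y) := by
    rw [Measure.restrict_apply_univ, μT_chainHull hyT, chainArea_singleton, sub_zero,
      abs_of_nonneg (sub_nonneg.2 hy.2)]
  have := (μT.map (squeezeMap y)).smul_finite (ENNReal.ofReal_ne_top (r := y))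
  rw [P, ← restrict_μT_add_smul_map_squeezeMap hy, lintegral_pi_add_of_insert_eq _ _
    (F := fun s => chainArea (insert (0, y) s) ^ k) hF habsorb, hmass]
  refine Finset.sum_congr rfl fun p _ => ?_
  rw [lintegral_pi_smul_map μT (squeezeMap y).continuous_of_finiteDimensional.measurable
    ENNReal.ofReal_ne_top p.1 (F := fun s => chainArea (insert (0, y) s) ^ k) (hF p.1), ← P,
    lintegral_chainArea_insert_image_squeezeMap hy, Finset.mul_sum, Finset.mul_sum, Finset.mul_sum]
  refine Finset.sum_congr rfl fun r _ => ?_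
  ring

lemma areaMoment_succ (n k : ℕ) : areaMoment (n + 1) k =
    (n + 1) * (ENNReal.ofReal (2 / (n + k + 1)) * ∑ p ∈ antidiagonal n, ∑ r ∈ antidiagonal k,
      n.choose p.1 * k.choose r.1 * areaMoment p.1 r.1 * ENNReal.ofReal
        ((p.2 + r.2 + 1).factorial * (p.1 + r.1).factorial / (n + k + 2).factorial)) := by
  have hsum : ∀ y ∈ Set.Ioo (0 : ℝ) 1, ENNReal.ofReal (1 - y) *
      ∫⁻ ω, chainArea (insert (0, y) (Set.range ω)) ^ k ∂P n =
        ∑ p ∈ antidiagonal n, ∑ r ∈ antidiagonal k, n.choose p.1 * k.choose r.1 *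
          areaMoment p.1 r.1 *
            (ENNReal.ofReal (1 - y) ^ (p.2 + r.2 + 1) * ENNReal.ofReal y ^ (p.1 + r.1)) := by
    intro y hy
    rw [lintegral_chainArea_insert (Set.Ioo_subset_Icc_self hy)]
    simp only [Finset.mul_sum]
    refine Finset.sum_congr rfl fun p _ => Finset.sum_congr rfl fun r _ => ?_
    ring
  rw [areaMoment_succ_eq_lintegral, setLIntegral_congr_fun measurableSet_Ioo hsum,
    lintegral_finsetSum _ fun _ _ => by fun_prop]
  congr 2
  refine Finset.sum_congr rfl fun p hp => ?_
  rw [lintegral_finsetSum _ fun _ _ => by fun_prop]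
  refine Finset.sum_congr rfl fun r hr => ?_
  have hdegree : p.2 + r.2 + 1 + (p.1 + r.1) + 1 = n + k + 2 := by
    rw [← mem_antidiagonal.1 hp, ← mem_antidiagonal.1 hr]
    ring
  rw [lintegral_const_mul _ (by fun_prop), setLIntegral_one_sub_pow_mul_pow, hdegree]

lemma choose_mul_factorial_div (m a j b : ℕ) :
    ((m + a + 1 + (j + b)).choose (j + b) * (m + a + 1) * ((m + a).choose m * (j + b).choose j) *
      ((a + b + 1).factorial * (m + j).factorial / (m + a + (j + b) + 2).factorial) : ℝ) =
      (a + b + 1) * (a + b).choose b * (m + j).choose j / (m + a + (j + b) + 2) := by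
  rw [← Nat.choose_symm_add (a := m + a + 1) (b := j + b), ← Nat.choose_symm_add (a := a) (b := b),
    ← Nat.choose_symm_add (a := m) (b := j)]
  have hn : m + a + 1 + (j + b) = m + a + (j + b) + 1 := by ring
  simp only [Nat.cast_add_choose]
  simp only [hn, Nat.factorial_succ]
  push_cast
  have := fun n : ℕ => (Nat.cast_ne_zero (R := ℝ)).2 n.factorial_ne_zero
  field_simp
  ring

lemma q_zero_left (k : ℕ) : q 0 k = if k = 0 then 1 else 0 := by
  rw [q_eq_choose_mul_areaMoment, areaMoment_zero_left]
  split_ifs <;> simp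

lemma toReal_areaMoment_succ (n k : ℕ) : (areaMoment (n + 1) k).toReal =
    (n + 1) * (2 / (n + k + 1) * ∑ p ∈ antidiagonal n, ∑ r ∈ antidiagonal k,
      n.choose p.1 * k.choose r.1 * (areaMoment p.1 r.1).toReal *
        ((p.2 + r.2 + 1).factorial * (p.1 + r.1).factorial / (n + k + 2).factorial)) := by
  have hne (p r : ℕ × ℕ) (x : ℝ) :
      (n.choose p.1 * k.choose r.1 * areaMoment p.1 r.1 * ENNReal.ofReal x : ℝ≥0∞) ≠ ∞ :=
    ENNReal.mul_ne_top (ENNReal.mul_ne_top (ENNReal.mul_ne_top (ENNReal.natCast_ne_top _)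
      (ENNReal.natCast_ne_top _)) (areaMoment_ne_top _ _)) ENNReal.ofReal_ne_top
  rw [areaMoment_succ, ENNReal.toReal_mul, ENNReal.toReal_mul,
    ENNReal.toReal_ofReal (by positivity),
    ENNReal.toReal_sum fun p _ => ENNReal.sum_ne_top.2 fun r _ => hne p r _]
  congr 2
  refine Finset.sum_congr rfl fun p _ => ?_
  rw [ENNReal.toReal_sum fun r _ => hne p r _]
  refine Finset.sum_congr rfl fun r _ => ?_
  simp only [ENNReal.toReal_mul, ENNReal.toReal_natCast]
  rw [ENNReal.toReal_ofReal (by positivity)]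

lemma q_succ (n k : ℕ) : q (n + 1) k = 2 / ((n + k + 1) * (n + k + 2)) *
    ∑ p ∈ antidiagonal n, ∑ r ∈ antidiagonal k,
      (p.2 + r.2 + 1) * (p.2 + r.2).choose r.2 * q p.1 r.1 := by
  rw [q_eq_choose_mul_areaMoment, toReal_areaMoment_succ]
  simp only [Finset.mul_sum]
  refine Finset.sum_congr rfl fun p hp => Finset.sum_congr rfl fun r hr => ?_
  obtain ⟨m, a⟩ := p
  obtain ⟨j, b⟩ := r
  obtain rfl : m + a = n := mem_antidiagonal.1 hp
  obtain rfl : j + b = k := mem_antidiagonal.1 hr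
  have hcoeff := choose_mul_factorial_div m a j b
  rw [q_eq_choose_mul_areaMoment, ← div_div]
  push_cast at hcoeff ⊢
  linear_combination 2 / (m + a + (j + b) + 1 : ℝ) * (areaMoment m j).toReal * hcoeff

lemma q_eq_momentSum (n k : ℕ) : q n k = momentSum n k := by
  induction n using Nat.strong_induction_on generalizing k with
  | _ n ih =>
    cases n with
    | zero => rw [q_zero_left, momentSum_zero_left]
    | succ n =>
      rw [q_succ, momentSum_succ]
      congr 1
      refine Finset.sum_congr rfl fun p hp => Finset.sum_congr rfl fun r _ => ?_
      rw [ih p.1 (Finset.Nat.antidiagonal.fst_lt hp)]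

end Moments

/-- exact moment formula
`C(n+k,k) E[V_n^k] = Σ_{i=1}^n Σ_{ℓ=i}^{n+k} (-1)^{ℓ+i} C(n+k-i,k) C(n+k,ℓ) c(i,ℓ)`. -/
theorem stmt12 (n k : ℕ) (hn : 1 ≤ n) :
    ((n + k).choose k : ℝ) * ∫ ω, (V n ω) ^ k ∂ P n
      = ∑ i ∈ Finset.Icc 1 n, ∑ l ∈ Finset.Icc i (n + k),
          (-1 : ℝ) ^ (l + i) * ((n + k - i).choose k : ℝ) * ((n + k).choose l : ℝ) * c i l := by
  change q n k = _
  rw [q_eq_momentSum, momentSum_eq_sum_Icc hn]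

end
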